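/- (Lemma: differential ε-lumpability implies ε-lumpability.) Let ξ : X → Z be a reaction coordinate with a disintegration family (μ_z), and suppose the system is differentially ε-lumpable with respect to ξ and (μ_z), i.e. (1/|Z|) ∫_Z ∫∫ (∫_X |p(x₁,y) − p(x₂,y)| dy) dμ_z(x₁) dμ_z(x₂) dz ≤ ε. Define p_L : Z × X → [0,∞) by p_L(z,y) := ∫ p(x',y) dμ_z(x'). Then (1/|Z|) ∫_Z ∫ (∫_X |p_L(z,y) − p(x,y)| dy) dμ_z(x) dz ≤ ε, and consequently, by the disintegration identity, the system is ε-lumpable with respect to ξ and p_L. -/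

import Mathlib

open MeasureTheory

/-- A family of probability measures whose evaluations are almost everywhere measurable agrees
almost everywhere with a Markov kernel. -/
theorem exists_markovKernel_ae_eq {α β : Type*} [MeasurableSpace α] [MeasurableSpace β]
    [MeasurableSpace.CountablyGenerated β] [Nonempty β] {m : Measure α} {ν : α → Measure β}
    (hprob : ∀ᵐ a ∂m, IsProbabilityMeasure (ν a))
    (hmeas : ∀ s, MeasurableSet s → AEMeasurable (fun a => ν a s) m) :
    ∃ κ : ProbabilityTheory.Kernel α β, ProbabilityTheory.IsMarkovKernel κ ∧
      ∀ᵐ a ∂m, κ a = ν a := by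
  classical
  set C : Set (Set β) := generateSetAlgebra (MeasurableSpace.countableGeneratingSet β) with hC
  have hCc : C.Countable :=
    countable_generateSetAlgebra (MeasurableSpace.countable_countableGeneratingSet)
  have hCgen : (inferInstance : MeasurableSpace β) = MeasurableSpace.generateFrom C := by
    rw [hC, generateFrom_generateSetAlgebra_eq,
      MeasurableSpace.generateFrom_countableGeneratingSet]
  have hCpi : IsPiSystem C := fun s hs t ht _ =>
    isSetAlgebra_generateSetAlgebra.inter_mem hs ht
  have hCm : ∀ s ∈ C, MeasurableSet s := fun s hs => by
    have h : MeasurableSet[MeasurableSpace.generateFrom C] s :=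
      MeasurableSpace.measurableSet_generateFrom hs
    rwa [← hCgen] at h
  have hgood : ∀ᵐ a ∂m, IsProbabilityMeasure (ν a) ∧
      ∀ s (hs : s ∈ C), ν a s = (hmeas s (hCm s hs)).mk _ a := by
    refine hprob.and ((ae_ball_iff hCc).2 fun s hs => (hmeas s (hCm s hs)).ae_eq_mk)
  obtain ⟨N, hN, hNm, hN0⟩ := exists_measurable_superset_of_null (ae_iff.1 hgood)
  have hgoodN : ∀ a ∉ N, IsProbabilityMeasure (ν a) ∧
      ∀ s (hs : s ∈ C), ν a s = (hmeas s (hCm s hs)).mk _ a := fun a ha => by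
    by_contra h
    exact ha (hN h)
  let b : β := Classical.arbitrary β
  let f : α → Measure β := fun a => if a ∈ N then Measure.dirac b else ν a
  have hf : ∀ a, IsProbabilityMeasure (f a) := fun a => by
    by_cases ha : a ∈ N
    · simp only [f, if_pos ha]; infer_instance
    · simp only [f, if_neg ha]; exact (hgoodN a ha).1
  have hfm : Measurable f := by
    refine Measurable.measure_of_isPiSystem_of_isProbabilityMeasure hCgen hCpi fun s hs => ?_
    have : (fun a => f a s) =
        fun a => if a ∈ N then Measure.dirac b s else (hmeas s (hCm s hs)).mk _ a := by
      funext a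
      by_cases ha : a ∈ N
      · simp only [f, if_pos ha]
      · simp only [f, if_neg ha]; exact (hgoodN a ha).2 s hs
    rw [this]
    exact Measurable.ite hNm measurable_const (hmeas s (hCm s hs)).measurable_mk
  refine ⟨⟨f, hfm⟩, ⟨hf⟩, ?_⟩
  filter_upwards [measure_eq_zero_iff_ae_notMem.1 hN0] with a ha
  exact if_neg ha

theorem integral_abs_sub_le_two {α β : Type*} [MeasurableSpace β] {ρ : Measure β}
    {p : α → β → ℝ} (hp0 : ∀ x y, 0 ≤ p x y) {x₁ x₂ : α}
    (h₁ : ∫ y, p x₁ y ∂ρ = 1) (h₂ : ∫ y, p x₂ y ∂ρ = 1) :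
    ∫ y, |p x₁ y - p x₂ y| ∂ρ ≤ 2 := by
  have i₁ : Integrable (p x₁) ρ := .of_integral_ne_zero (by simp [h₁])
  have i₂ : Integrable (p x₂) ρ := .of_integral_ne_zero (by simp [h₂])
  calc ∫ y, |p x₁ y - p x₂ y| ∂ρ ≤ ∫ y, (p x₁ y + p x₂ y) ∂ρ := by
        refine integral_mono (i₁.sub i₂).abs (i₁.add i₂) fun y => ?_
        exact abs_sub_le_iff.2 ⟨by linarith [hp0 x₂ y], by linarith [hp0 x₁ y]⟩
    _ = 2 := by rw [integral_add i₁ i₂, h₁, h₂]; norm_num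

section TransitionDensity

variable {α β : Type*} [MeasurableSpace α] [MeasurableSpace β] {μ : Measure α} {ρ : Measure β}
  {p : α → β → ℝ}

theorem integrable_uncurry_of_ae_integral_eq_one [IsProbabilityMeasure μ] [SFinite ρ]
    (hpm : Measurable (Function.uncurry p)) (hp0 : ∀ x y, 0 ≤ p x y)
    (hp1 : ∀ᵐ x ∂μ, ∫ y, p x y ∂ρ = 1) :
    Integrable (Function.uncurry p) (μ.prod ρ) := by
  refine (integrable_prod_iff hpm.aestronglyMeasurable).2 ⟨?_, ?_⟩
  · filter_upwards [hp1] with x hx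
    exact Integrable.of_integral_ne_zero (by simp [Function.uncurry, hx])
  · refine (integrable_const (1 : ℝ)).congr ?_
    filter_upwards [hp1] with x hx
    simp [Function.uncurry, Real.norm_eq_abs, abs_of_nonneg (hp0 _ _), hx]

theorem stronglyMeasurable_integral_abs_sub [SFinite ρ]
    (hpm : Measurable (Function.uncurry p)) :
    StronglyMeasurable fun q : α × α => ∫ y, |p q.2 y - p q.1 y| ∂ρ := by
  have h₁ : Measurable fun w : (α × α) × β => p w.1.1 w.2 :=
    hpm.comp (measurable_fst.fst.prodMk measurable_snd)
  have h₂ : Measurable fun w : (α × α) × β => p w.1.2 w.2 :=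
    hpm.comp (measurable_fst.snd.prodMk measurable_snd)
  have h : Measurable fun w : (α × α) × β => |p w.1.2 w.2 - p w.1.1 w.2| := (h₂.sub h₁).abs
  exact h.stronglyMeasurable.integral_prod_right'

theorem integral_abs_average_sub_le [IsProbabilityMeasure μ] [SFinite ρ]
    (hpm : Measurable (Function.uncurry p)) (hp0 : ∀ x y, 0 ≤ p x y)
    (hp1 : ∀ᵐ x ∂μ, ∫ y, p x y ∂ρ = 1) {x : α} (hx : ∫ y, p x y ∂ρ = 1) :
    ∫ y, |(∫ x', p x' y ∂μ) - p x y| ∂ρ ≤ ∫ x', ∫ y, |p x' y - p x y| ∂ρ ∂μ := by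
  have hint := integrable_uncurry_of_ae_integral_eq_one hpm hp0 hp1
  have hix : Integrable (p x) ρ := .of_integral_ne_zero (by simp [hx])
  have hD : Integrable (Function.uncurry fun x' y => |p x' y - p x y|) (μ.prod ρ) :=
    (hint.sub (hix.comp_snd μ)).abs
  rw [integral_integral_swap hD]
  refine integral_mono_of_nonneg (.of_forall fun y => abs_nonneg _) hD.integral_prod_right ?_
  filter_upwards [hint.prod_left_ae] with y hy
  have hy' : Integrable (fun x' => p x' y) μ := hy
  have : (∫ x', p x' y ∂μ) - p x y = ∫ x', (p x' y - p x y) ∂μ := by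
    rw [integral_sub hy' (integrable_const _)]; simp
  rw [this]
  exact abs_integral_le_integral_abs

theorem ae_integral_integral_abs_sub_le_two [IsProbabilityMeasure μ]
    (hp0 : ∀ x y, 0 ≤ p x y) (hp1 : ∀ᵐ x ∂μ, ∫ y, p x y ∂ρ = 1) :
    ∀ᵐ x ∂μ, ‖∫ x', ∫ y, |p x' y - p x y| ∂ρ ∂μ‖ ≤ 2 := by
  filter_upwards [hp1] with x hx
  refine (norm_integral_le_of_norm_le_const (C := 2) ?_).trans (by simp)
  filter_upwards [hp1] with x' hx'
  rw [Real.norm_of_nonneg (integral_nonneg fun _ => abs_nonneg _)]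
  exact integral_abs_sub_le_two hp0 hx' hx

theorem integral_integral_abs_average_sub_le [IsProbabilityMeasure μ] [SFinite ρ]
    (hpm : Measurable (Function.uncurry p)) (hp0 : ∀ x y, 0 ≤ p x y)
    (hp1 : ∀ᵐ x ∂μ, ∫ y, p x y ∂ρ = 1) :
    ∫ x, ∫ y, |(∫ x', p x' y ∂μ) - p x y| ∂ρ ∂μ ≤
      ∫ x, ∫ x', ∫ y, |p x' y - p x y| ∂ρ ∂μ ∂μ := by
  refine integral_mono_of_nonneg (.of_forall fun x => integral_nonneg fun y => abs_nonneg _)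
    (.of_bound ?_ 2 (ae_integral_integral_abs_sub_le_two hp0 hp1)) ?_
  · exact (stronglyMeasurable_integral_abs_sub hpm).integral_prod_right'.aestronglyMeasurable
  · filter_upwards [hp1] with x hx
    exact integral_abs_average_sub_le hpm hp0 hp1 hx

end TransitionDensity

/-- In a disintegration of a probability measure, the conditional masses of a measurable set form
an integrable function, even if the disintegration identity is only assumed for Bochner
integrals. -/
theorem integrable_measureReal_of_disintegration {α β : Type*} [MeasurableSpace α]
    [MeasurableSpace β] {m : Measure α} {ρ : Measure β} {π : β → ℝ} {ν : α → Measure β}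
    (hπ : ∫ x, π x ∂ρ = 1) (hν : ∀ᵐ z ∂m, IsProbabilityMeasure (ν z)) [IsFiniteMeasure m]
    (hdis : ∀ h : β → ℝ, Integrable (fun x => h x * π x) ρ →
      ∫ z, ∫ x, h x ∂ν z ∂m = ∫ x, h x * π x ∂ρ)
    {s : Set β} (hs : MeasurableSet s) :
    Integrable (fun z => (ν z).real s) m ∧ ∫ z, (ν z).real s ∂m = ∫ x in s, π x ∂ρ := by
  have hπi : Integrable π ρ := .of_integral_ne_zero (by simp [hπ])
  have key : ∀ t : Set β, MeasurableSet t →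
      ∫ z, (ν z).real t ∂m = ∫ x in t, π x ∂ρ := fun t ht => by
    have e : (fun x => t.indicator (1 : β → ℝ) x * π x) = t.indicator π := by
      funext x; by_cases hx : x ∈ t <;> simp [hx]
    have := hdis (t.indicator 1) (by rw [e]; exact hπi.indicator ht)
    simpa only [integral_indicator_one ht, e, integral_indicator ht] using this
  refine ⟨?_, key s hs⟩
  by_contra hni
  have hnc : ¬ Integrable (fun z => (ν z).real sᶜ) m := fun hc => hni <| by
    refine ((integrable_const (1 : ℝ)).sub hc).congr ?_
    filter_upwards [hν] with z hz
    simp [probReal_compl_eq_one_sub hs]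
  have h₁ := key s hs
  have h₂ := key sᶜ hs.compl
  rw [integral_undef hni] at h₁
  rw [integral_undef hnc] at h₂
  have := integral_add_compl hs hπi
  linarith

/-- (Differential ε-lumpability implies ε-lumpability,
with `p_L(z,y) := ∫ p(x',y) dμ_z(x')`.) -/
theorem differentially_lumpable_implies_lumpable
    {n r : ℕ} (X : Set (Fin n → ℝ)) (hX : MeasurableSet X)
    (Z : Set (Fin r → ℝ)) (hZ : MeasurableSet Z)
    (hZpos : 0 < volume Z) (hZfin : volume Z < ⊤)
    (π : (Fin n → ℝ) → ℝ) (hπmeas : Measurable π) (hπcont : ContinuousOn π X)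
    (hπpos : ∀ x ∈ X, 0 < π x) (hπbdd : BddAbove (π '' X))
    (hπprob : ∫ x in X, π x = 1)
    (p : (Fin n → ℝ) → (Fin n → ℝ) → ℝ)
    (hpmeas : Measurable (Function.uncurry p))
    (hpnonneg : ∀ x y, 0 ≤ p x y)
    (hpnorm : ∀ x ∈ X, ∫ y in X, p x y = 1)
    (ξ : (Fin n → ℝ) → Fin r → ℝ) (hξmeas : Measurable ξ) (hξmap : ∀ x ∈ X, ξ x ∈ Z)
    -- disintegration family (μ_z) for ξ
    (ν : (Fin r → ℝ) → Measure (Fin n → ℝ))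
    (hνprob : ∀ z ∈ Z, IsProbabilityMeasure (ν z))
    (hνconc : ∀ z ∈ Z, ν z {x | ξ x ≠ z} = 0)
    (hνdis : ∀ h : (Fin n → ℝ) → ℝ, IntegrableOn (fun x => h x * π x) X →
      ∫ z in Z, ∫ x, h x ∂ν z = ∫ x in X, h x * π x)
    (ε : ℝ) (hε : 0 ≤ ε)
    -- differential ε-lumpability with respect to ξ and (μ_z)
    (hdiff : (volume Z).toReal⁻¹ *
      ∫ z in Z, ∫ x₂, ∫ x₁, (∫ y in X, |p x₁ y - p x₂ y|) ∂ν z ∂ν z ≤ ε) :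
    -- the level-set inequality for p_L(z,y) := ∫ p(x',y) dμ_z(x') …
    ((volume Z).toReal⁻¹ *
      ∫ z in Z, ∫ x, (∫ y in X, |(∫ x', p x' y ∂ν z) - p x y|) ∂ν z ≤ ε) ∧
    -- … and consequently ε-lumpability with respect to ξ and this p_L
    ((volume Z).toReal⁻¹ *
      ∫ x in X, (∫ y in X, |p x y - ∫ x', p x' y ∂ν (ξ x)|) * π x ≤ ε) := by
  have hZprob : ∀ᵐ z ∂volume.restrict Z, IsProbabilityMeasure (ν z) :=
    (ae_restrict_iff' hZ).2 (.of_forall hνprob)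
  have : IsFiniteMeasure (volume.restrict Z) := ⟨by simpa using hZfin⟩
  have hcond {s : Set (Fin n → ℝ)} (hs : MeasurableSet s) :=
    integrable_measureReal_of_disintegration hπprob hZprob hνdis hs
  obtain ⟨κ, _, hκ⟩ := exists_markovKernel_ae_eq hZprob fun s hs => by
    refine (hcond hs).1.aemeasurable.ennreal_ofReal.congr ?_
    filter_upwards [hZprob] with z hz
    simp
  have hνX : ∀ᵐ z ∂volume.restrict Z, ∀ᵐ x ∂ν z, x ∈ X := by
    have h := hcond hX.compl
    rw [Measure.restrict_restrict hX.compl, Set.compl_inter_self, Measure.restrict_empty,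
      integral_zero_measure, integral_eq_zero_iff_of_nonneg (fun _ => measureReal_nonneg) h.1] at h
    filter_upwards [h.2, hZprob] with z hz _
    exact (measureReal_eq_zero_iff (measure_ne_top _ _)).1 hz
  have hp1 : ∀ᵐ z ∂volume.restrict Z, ∀ᵐ x ∂ν z, ∫ y in X, p x y = 1 := by
    filter_upwards [hνX] with z hz
    exact hz.mono hpnorm
  have hDint : Integrable
      (fun z => ∫ x₂, ∫ x₁, (∫ y in X, |p x₁ y - p x₂ y|) ∂ν z ∂ν z) (volume.restrict Z) := by
    refine .of_bound ?_ 2 ?_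
    · have hD := stronglyMeasurable_integral_abs_sub (ρ := volume.restrict X) hpmeas
      have h₁ : StronglyMeasurable fun w : (Fin r → ℝ) × (Fin n → ℝ) =>
          ∫ x₁, (∫ y in X, |p x₁ y - p w.2 y|) ∂κ w.1 :=
        StronglyMeasurable.integral_kernel_prod_right' (κ := κ.comap Prod.fst measurable_fst)
          (hD.comp_measurable (measurable_fst.snd.prodMk measurable_snd))
      refine (h₁.integral_kernel_prod_right' (κ := κ)).aestronglyMeasurable.congr ?_
      filter_upwards [hκ] with z hz
      simp only [hz]
    · filter_upwards [hZprob, hp1] with z _ hz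
      refine (norm_integral_le_of_norm_le_const
        (ae_integral_integral_abs_sub_le_two hpnonneg hz)).trans (by simp)
  have hlevel : (volume Z).toReal⁻¹ *
      ∫ z in Z, ∫ x, (∫ y in X, |(∫ x', p x' y ∂ν z) - p x y|) ∂ν z ≤ ε := by
    refine le_trans (mul_le_mul_of_nonneg_left ?_ (by positivity)) hdiff
    refine integral_mono_of_nonneg (.of_forall fun z => integral_nonneg fun x =>
      integral_nonneg fun y => abs_nonneg _) hDint ?_
    filter_upwards [hZprob, hp1] with z _ hz
    exact integral_integral_abs_average_sub_le hpmeas hpnonneg hz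
  refine ⟨hlevel, ?_⟩
  by_cases hF : IntegrableOn
      (fun x => (∫ y in X, |p x y - ∫ x', p x' y ∂ν (ξ x)|) * π x) X
  · rw [← hνdis _ hF]
    convert hlevel using 2
    refine setIntegral_congr_fun hZ fun z hz => integral_congr_ae ?_
    have hξz : ∀ᵐ x ∂ν z, ξ x = z := hνconc z hz
    filter_upwards [hξz] with x hx
    simp only [hx, abs_sub_comm]
  · rw [integral_undef hF, mul_zero]
    exact hε
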